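/- Under the standing assumptions on the delayed system, let η > 0, let h and ϖ be the weight and generalized metric as above, let 𝒱 be the integral operator as above, and let M = sup_{s∈[t₀,T]} ( (s−t₀)^β / E_β((a₀+a₁+η)(s−t₀)^β) ). Let y₀ ∈ C([t₀−g,T], ℝⁿ) be defined by y₀(s) = ν(s) for s ∈ [t₀−g, t₀] and y₀(s) = ν(t₀) for s ∈ [t₀, T]. Then ϖ(y₀, 𝒱y₀) ≤ M [ (a₀+a₁)‖ν‖ + a₂ ρ ] / Γ(β+1), where ‖ν‖ = sup_{s∈[t₀−g,t₀]} ‖ν(s)‖. -/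

import Mathlib

open Set ENNReal MeasureTheory intervalIntegral

/-- Euclidean `ℝⁿ`. -/
abbrev Euc (n : ℕ) := EuclideanSpace ℝ (Fin n)

/-- The Mittag-Leffler function `E_β(t) = Σ_{b ≥ 0} t^b / Γ(bβ + 1)`. -/
noncomputable def mittagLeffler (β t : ℝ) : ℝ :=
  ∑' b : ℕ, t ^ b / Real.Gamma (b * β + 1)

/-- The weight function: `h(s) = 1` for `s ≤ t₀` and `h(s) = E_β(θ (s − t₀)^β)` for `s ≥ t₀`. -/
noncomputable def weight (β t₀ θ : ℝ) (s : ℝ) : ℝ :=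
  if s ≤ t₀ then 1 else mittagLeffler β (θ * (s - t₀) ^ β)

/-- The weighted generalized metric
`ϖ(x₁, x₂) = inf { b ∈ [0, ∞] : ‖x₁(t) − x₂(t)‖ ≤ b h(t) for all t ∈ [t₀ − g, T] }`. -/
noncomputable def genDist {n : ℕ} (β t₀ T g θ : ℝ) (x₁ x₂ : ℝ → Euc n) : ℝ≥0∞ :=
  sInf {b : ℝ≥0∞ | ∀ t ∈ Icc (t₀ - g) T,
    (‖x₁ t - x₂ t‖₊ : ℝ≥0∞) ≤ b * ENNReal.ofReal (weight β t₀ θ t)}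

/-- The integral operator `𝒱`:
`(𝒱 y)(t) = ν(t)` on `[t₀ − g, t₀]` and
`(𝒱 y)(t) = ν(t₀) + (1/Γ(β)) ∫_{t₀}^t (t−s)^{β−1} [A₀ y(s) + A₁ y(s−g(s)) + A₂ d(s)
  + f(s, y(s), y(s−g(s)), d(s))] ds` on `[t₀, T]`. -/
noncomputable def Vop {n p : ℕ} (β t₀ : ℝ)
    (A₀ A₁ : Euc n →L[ℝ] Euc n) (A₂ : Euc p →L[ℝ] Euc n)
    (f : ℝ → Euc n → Euc n → Euc p → Euc n) (d : ℝ → Euc p) (gdel : ℝ → ℝ)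
    (ν : ℝ → Euc n) (y : ℝ → Euc n) : ℝ → Euc n :=
  fun t =>
    if t ≤ t₀ then ν t
    else ν t₀ + (Real.Gamma β)⁻¹ •
      ∫ s in t₀..t, ((t - s) ^ (β - 1)) •
        (A₀ (y s) + A₁ (y (s - gdel s)) + A₂ (d s) + f s (y s) (y (s - gdel s)) (d s))

theorem Real.rpow_mul_Gamma_le_Gamma_add {x β : ℝ} (hx : 1 < x) (hβ : 0 < β) :
    (x - 1) ^ β * Real.Gamma x ≤ Real.Gamma (x + β) := by
  have hx1 : 0 < x - 1 := by linarith
  have hG : 0 < Real.Gamma (x - 1) := Real.Gamma_pos_of_pos hx1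
  have hslope := Real.convexOn_log_Gamma.slope_mono_adjacent (x := x - 1) (y := x) (z := x + β)
    (mem_Ioi.2 hx1) (mem_Ioi.2 (by linarith)) (by linarith) (by linarith)
  have hrec : Real.Gamma x = (x - 1) * Real.Gamma (x - 1) := by
    simpa using Real.Gamma_add_one hx1.ne'
  have hlog : Real.log (Real.Gamma x) = Real.log (x - 1) + Real.log (Real.Gamma (x - 1)) := by
    rw [hrec, Real.log_mul hx1.ne' hG.ne']
  rw [_root_.sub_sub_cancel, div_one, add_sub_cancel_left, Function.comp_apply, Function.comp_apply,
    Function.comp_apply] at hslope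
  rw [le_div_iff₀ hβ] at hslope
  have hGx : 0 < Real.Gamma x := Real.Gamma_pos_of_pos (by linarith)
  have hpow : 0 < (x - 1) ^ β := Real.rpow_pos_of_pos hx1 β
  rw [← Real.log_le_log_iff (mul_pos hpow hGx) (Real.Gamma_pos_of_pos (by linarith)),
    Real.log_mul hpow.ne' hGx.ne', Real.log_rpow hx1]
  nlinarith

theorem summable_mittagLeffler {β : ℝ} (hβ : 0 < β) (x : ℝ) :
    Summable fun b : ℕ => x ^ b / Real.Gamma (b * β + 1) := by
  have htend : Filter.Tendsto (fun b : ℕ => ((b : ℝ) * β) ^ β) Filter.atTop Filter.atTop :=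
    (tendsto_rpow_atTop hβ).comp (tendsto_natCast_atTop_atTop.atTop_mul_const hβ)
  refine summable_of_ratio_norm_eventually_le (r := 1 / 2) (by norm_num) ?_
  filter_upwards [htend.eventually_ge_atTop (2 * |x|), Filter.eventually_gt_atTop 0] with b hb hb0
  have hbβ : 0 < (b : ℝ) * β := mul_pos (by exact_mod_cast hb0) hβ
  have hG : 0 < Real.Gamma (b * β + 1) := Real.Gamma_pos_of_pos (by linarith)
  have hG' : 0 < Real.Gamma ((b + 1 : ℕ) * β + 1) := Real.Gamma_pos_of_pos (by positivity)
  have hle := Real.rpow_mul_Gamma_le_Gamma_add (x := b * β + 1) (by linarith) hβ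
  rw [add_sub_cancel_right, show (b : ℝ) * β + 1 + β = (b + 1 : ℕ) * β + 1 by push_cast; ring]
    at hle
  rw [norm_div, norm_div, norm_pow, norm_pow, Real.norm_eq_abs, Real.norm_of_nonneg hG.le,
    Real.norm_of_nonneg hG'.le, ← mul_div_assoc, div_le_div_iff₀ hG' hG]
  have h := (mul_le_mul_of_nonneg_right hb hG.le).trans hle
  calc |x| ^ (b + 1) * Real.Gamma (b * β + 1)
      = 1 / 2 * |x| ^ b * (2 * |x| * Real.Gamma (b * β + 1)) := by ring
    _ ≤ 1 / 2 * |x| ^ b * Real.Gamma ((b + 1 : ℕ) * β + 1) := by gcongr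

theorem one_le_mittagLeffler {β x : ℝ} (hβ : 0 < β) (hx : 0 ≤ x) : 1 ≤ mittagLeffler β x := by
  have h := (summable_mittagLeffler hβ x).le_tsum 0 fun b _ =>
    div_nonneg (pow_nonneg hx b) (Real.Gamma_nonneg_of_nonneg (by positivity))
  simpa [mittagLeffler] using h

theorem norm_integral_rpow_smul_le {E : Type*} [NormedAddCommGroup E] [NormedSpace ℝ E]
    {β a t C : ℝ} (hβ : 0 < β) (hat : a ≤ t) {F : ℝ → E} (hF : ∀ s ∈ Ioc a t, ‖F s‖ ≤ C) :
    ‖∫ s in a..t, ((t - s) ^ (β - 1)) • F s‖ ≤ (t - a) ^ β / β * C := by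
  have hint : IntervalIntegrable (fun s : ℝ => (t - s) ^ (β - 1)) volume a t := by
    have h := (intervalIntegrable_rpow' (a := t - a) (b := 0) (r := β - 1)
      (by linarith)).comp_sub_left t
    simpa using h
  have heq : ∫ s in a..t, (t - s) ^ (β - 1) * C = (t - a) ^ β / β * C := by
    rw [intervalIntegral.integral_mul_const,
      intervalIntegral.integral_comp_sub_left (fun s : ℝ => s ^ (β - 1)) t, sub_self,
      integral_rpow (Or.inl (by linarith)), sub_add_cancel, Real.zero_rpow hβ.ne', sub_zero]
  rw [← heq]
  refine intervalIntegral.norm_integral_le_of_norm_le hat (ae_of_all _ fun s hs => ?_)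
    (hint.mul_const C)
  rw [norm_smul, Real.norm_of_nonneg (Real.rpow_nonneg (by linarith [hs.2]) _)]
  exact mul_le_mul_of_nonneg_left (hF s hs) (Real.rpow_nonneg (by linarith [hs.2]) _)

/-- Under the standing assumptions on the fractional delayed system, with
`y₀ = ν` on `[t₀ − g, t₀]` and `y₀ ≡ ν(t₀)` on `[t₀, T]`, the weighted generalized
distance between `y₀` and `𝒱 y₀` satisfies
`ϖ(y₀, 𝒱y₀) ≤ M [(a₀+a₁)‖ν‖ + a₂ρ] / Γ(β+1)`. -/
theorem Vop_dist_y0 {n p : ℕ} (β t₀ T g η : ℝ)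
    (hβ0 : 0 < β) (hβ1 : β < 1) (hT : t₀ < T) (hg : 0 ≤ g) (hη : 0 < η)
    (gdel : ℝ → ℝ) (hgdel_cont : ContinuousOn gdel (Icc t₀ T))
    (hgdel_mem : ∀ t ∈ Icc t₀ T, gdel t ∈ Icc 0 g)
    (A₀ A₁ : Euc n →L[ℝ] Euc n) (A₂ : Euc p →L[ℝ] Euc n)
    (κ : ℝ → ℝ) (hκ_cont : Continuous κ) (hκ_nonneg : ∀ s, 0 ≤ κ s)
    (f : ℝ → Euc n → Euc n → Euc p → Euc n)
    (hf_cont : Continuous fun q : ℝ × Euc n × Euc n × Euc p => f q.1 q.2.1 q.2.2.1 q.2.2.2)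
    (hf_lip : ∀ (s : ℝ) (u₁ u₂ : Euc n) (u₃ : Euc p) (w₁ w₂ : Euc n) (w₃ : Euc p),
      ‖f s u₁ u₂ u₃ - f s w₁ w₂ w₃‖ ≤ κ s * (‖u₁ - w₁‖ + ‖u₂ - w₂‖ + ‖u₃ - w₃‖))
    (hf_zero : ∀ s : ℝ, f s 0 0 0 = 0)
    (ρ : ℝ) (hρ : 0 < ρ) (d : ℝ → Euc p) (hd_cont : Continuous d) (hd : ∀ t, ‖d t‖ ≤ ρ)
    (ν : ℝ → Euc n) (hν : ContinuousOn ν (Icc (t₀ - g) t₀))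
    (a₀ a₁ a₂ : ℝ)
    (ha₀ : IsGreatest ((fun s => ‖A₀‖ + κ s) '' Icc t₀ T) a₀)
    (ha₁ : IsGreatest ((fun s => ‖A₁‖ + κ s) '' Icc t₀ T) a₁)
    (ha₂ : IsGreatest ((fun s => ‖A₂‖ + κ s) '' Icc t₀ T) a₂)
    (M : ℝ) (hM : M = sSup ((fun s : ℝ =>
      (s - t₀) ^ β / mittagLeffler β ((a₀ + a₁ + η) * (s - t₀) ^ β)) '' Icc t₀ T))
    (νnorm : ℝ) (hνnorm : νnorm = sSup ((fun s => ‖ν s‖) '' Icc (t₀ - g) t₀)) :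
    genDist β t₀ T g (a₀ + a₁ + η)
        (fun t => if t ≤ t₀ then ν t else ν t₀)
        (Vop β t₀ A₀ A₁ A₂ f d gdel ν (fun t => if t ≤ t₀ then ν t else ν t₀)) ≤
      ENNReal.ofReal (M * ((a₀ + a₁) * νnorm + a₂ * ρ) / Real.Gamma (β + 1)) := by
  have hpow : ∀ s ∈ Icc t₀ T, 0 ≤ (s - t₀) ^ β := fun s hs =>
    Real.rpow_nonneg (by linarith [hs.1]) _
  have hb₀ : ∀ s ∈ Icc t₀ T, ‖A₀‖ + κ s ≤ a₀ := fun s hs => ha₀.2 (mem_image_of_mem _ hs)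
  have hb₁ : ∀ s ∈ Icc t₀ T, ‖A₁‖ + κ s ≤ a₁ := fun s hs => ha₁.2 (mem_image_of_mem _ hs)
  have hb₂ : ∀ s ∈ Icc t₀ T, ‖A₂‖ + κ s ≤ a₂ := fun s hs => ha₂.2 (mem_image_of_mem _ hs)
  have ht₀ : t₀ ∈ Icc t₀ T := left_mem_Icc.2 hT.le
  have ha₀0 : 0 ≤ a₀ := by linarith [hb₀ t₀ ht₀, norm_nonneg A₀, hκ_nonneg t₀]
  have ha₁0 : 0 ≤ a₁ := by linarith [hb₁ t₀ ht₀, norm_nonneg A₁, hκ_nonneg t₀]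
  have ha₂0 : 0 ≤ a₂ := by linarith [hb₂ t₀ ht₀, norm_nonneg A₂, hκ_nonneg t₀]
  have hE : ∀ s ∈ Icc t₀ T, 1 ≤ mittagLeffler β ((a₀ + a₁ + η) * (s - t₀) ^ β) := fun s hs =>
    one_le_mittagLeffler hβ0 (mul_nonneg (by linarith) (hpow s hs))
  have hν_le : ∀ s ∈ Icc (t₀ - g) t₀, ‖ν s‖ ≤ νnorm := fun s hs => hνnorm ▸
    le_csSup (isCompact_Icc.bddAbove_image hν.norm) (mem_image_of_mem _ hs)
  have hνt₀ : ‖ν t₀‖ ≤ νnorm := hν_le t₀ ⟨by linarith, le_rfl⟩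
  have hνnorm0 : 0 ≤ νnorm := (norm_nonneg _).trans hνt₀
  have hM_le : ∀ s ∈ Icc t₀ T,
      (s - t₀) ^ β ≤ M * mittagLeffler β ((a₀ + a₁ + η) * (s - t₀) ^ β) := by
    intro s hs
    rw [← div_le_iff₀ (zero_lt_one.trans_le (hE s hs)), hM]
    refine le_csSup ⟨(T - t₀) ^ β, ?_⟩ (mem_image_of_mem _ hs)
    rintro _ ⟨u, hu, rfl⟩
    exact (div_le_self (hpow u hu) (hE u hu)).trans
      (Real.rpow_le_rpow (by linarith [hu.1]) (by linarith [hu.2]) hβ0.le)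
  set C := (a₀ + a₁) * νnorm + a₂ * ρ with hC
  have hC0 : 0 ≤ C := by positivity
  have hΓ : 0 < Real.Gamma β := Real.Gamma_pos_of_pos hβ0
  refine sInf_le fun t ht => ?_
  by_cases htt : t ≤ t₀
  · simp [Vop, htt]
  have htT : t ∈ Icc t₀ T := ⟨(not_le.1 htt).le, ht.2⟩
  have hE0 := zero_le_one.trans (hE t htT)
  simp only [Vop, weight, if_neg htt, sub_add_cancel_left, nnnorm_neg]
  rw [← ENNReal.ofReal_mul' hE0, ← enorm_eq_nnnorm, ← ofReal_norm, norm_smul,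
    Real.norm_of_nonneg (inv_nonneg.2 hΓ.le)]
  refine ENNReal.ofReal_le_ofReal ?_
  have hint := norm_integral_rpow_smul_le (C := C) hβ0 htT.1
    (F := fun s => A₀ (if s ≤ t₀ then ν s else ν t₀) +
      A₁ (if s - gdel s ≤ t₀ then ν (s - gdel s) else ν t₀) + A₂ (d s) +
      f s (if s ≤ t₀ then ν s else ν t₀)
        (if s - gdel s ≤ t₀ then ν (s - gdel s) else ν t₀) (d s)) ?_
  · calc _ ≤ (Real.Gamma β)⁻¹ * ((t - t₀) ^ β / β * C) := by gcongr
      _ = (t - t₀) ^ β * (C / Real.Gamma (β + 1)) := by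
        rw [Real.Gamma_add_one hβ0.ne']; field_simp
      _ ≤ M * mittagLeffler β ((a₀ + a₁ + η) * (t - t₀) ^ β) * (C / Real.Gamma (β + 1)) :=
        mul_le_mul_of_nonneg_right (hM_le t htT)
          (div_nonneg hC0 (Real.Gamma_nonneg_of_nonneg (by linarith)))
      _ = _ := by ring
  · intro s hs
    have hsT : s ∈ Icc t₀ T := ⟨hs.1.le, hs.2.trans ht.2⟩
    have hu : ‖if s ≤ t₀ then ν s else ν t₀‖ ≤ νnorm := by rwa [if_neg (not_le.2 hs.1)]
    have hw : ‖if s - gdel s ≤ t₀ then ν (s - gdel s) else ν t₀‖ ≤ νnorm := by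
      split_ifs with h
      · exact hν_le _ ⟨by linarith [hs.1, (hgdel_mem s hsT).2], h⟩
      · exact hνt₀
    generalize (if s ≤ t₀ then ν s else ν t₀) = u at hu
    generalize (if s - gdel s ≤ t₀ then ν (s - gdel s) else ν t₀) = w at hw
    have hf : ‖f s u w (d s)‖ ≤ κ s * (‖u‖ + ‖w‖ + ‖d s‖) := by
      simpa [hf_zero] using hf_lip s u w (d s) 0 0 0
    calc ‖A₀ u + A₁ w + A₂ (d s) + f s u w (d s)‖
        ≤ ‖A₀ u‖ + ‖A₁ w‖ + ‖A₂ (d s)‖ + ‖f s u w (d s)‖ := norm_add₄_le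
      _ ≤ ‖A₀‖ * ‖u‖ + ‖A₁‖ * ‖w‖ + ‖A₂‖ * ‖d s‖ + κ s * (‖u‖ + ‖w‖ + ‖d s‖) := by
        gcongr <;> exact ContinuousLinearMap.le_opNorm _ _
      _ = (‖A₀‖ + κ s) * ‖u‖ + (‖A₁‖ + κ s) * ‖w‖ + (‖A₂‖ + κ s) * ‖d s‖ := by ring
      _ ≤ a₀ * νnorm + a₁ * νnorm + a₂ * ρ := by
        gcongr
        exacts [hb₀ s hsT, hb₁ s hsT, hb₂ s hsT, hd s]
      _ = C := by rw [hC]; ring
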